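/- For every integer k ≥ 2, the maximum over all binary (2^k−1−k)×(2^k−1) matrices A of the minimum cardinality of a nonempty 1-free set of columns of A equals 2^{k−1}, and the maximum over all such matrices of the minimum cardinality of a nonempty even set of columns also equals 2^{k−1}. That is, u(2^k−1−k, 2^k−1) = ε(2^k−1−k, 2^k−1) = 2^{k−1}. -/

import Mathlib

/-- The stopping distance of a binary matrix `A`: the minimum cardinality of a nonempty
1-free set of columns of `A` (a set of columns is 1-free if no row sums to exactly `1`
over that set). -/
noncomputable def stoppingDistance {m n : ℕ} (A : Fin m → Fin n → ℕ) : ℕ :=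
  sInf {c | ∃ S : Finset (Fin n), S.Nonempty ∧ (∀ i, ∑ j ∈ S, A i j ≠ 1) ∧ S.card = c}

/-- The distance of (the code with parity-check matrix) a binary matrix `A`: the minimum
cardinality of a nonempty even set of columns of `A`. -/
noncomputable def codeDistance {m n : ℕ} (A : Fin m → Fin n → ℕ) : ℕ :=
  sInf {c | ∃ S : Finset (Fin n), S.Nonempty ∧ (∀ i, Even (∑ j ∈ S, A i j)) ∧ S.card = c}

/-- `u m n`: the maximum stopping distance over all `m × n` binary matrices. -/
noncomputable def maxStoppingDistance (m n : ℕ) : ℕ :=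
  sSup {d | ∃ A : Fin m → Fin n → ℕ, (∀ i j, A i j ≤ 1) ∧ stoppingDistance A = d}

/-- `ε m n`: the maximum distance over all `m × n` binary matrices. -/
noncomputable def maxCodeDistance (m n : ℕ) : ℕ :=
  sSup {d | ∃ A : Fin m → Fin n → ℕ, (∀ i j, A i j ≤ 1) ∧ codeDistance A = d}

/-!
A matrix with `2 ^ k - 1 - k` rows and `2 ^ k - 1` columns has a binary code of at least `2 ^ k`
words in the kernel of its reduction mod 2. Over all words of such a code each coordinate is
nonzero at most half of the time, so by averaging (the Plotkin bound) some nonzero word has weight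
at most `2 ^ (k - 1)`. Its support is an even, hence 1-free, set of columns.

Equality is attained by parity-check matrices of the simplex codes, built recursively by the
`(u | u + v)` construction: duplicate all columns, add one extra column `∞`, and for each column
add a row supported on it, its copy and `∞`. A 1-free set either contains `∞`, and then meets each
of the pairs, or consists of two copies of a 1-free set of the previous matrix.
-/

open Finset

section AdditiveCode

theorem card_le_card_mul_card_ker {G H : Type*} [AddGroup G] [AddGroup H] [Finite H]
    (f : G →+ H) : Nat.card G ≤ Nat.card H * Nat.card f.ker := by
  rw [← f.ker.card_mul_index, AddSubgroup.index_ker, mul_comm]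
  exact Nat.mul_le_mul_right _ (Nat.card_le_card_of_injective _ Subtype.val_injective)

theorem card_mul_card_ne_zero_le {G H : Type*} [AddGroup G] [Fintype G] [AddGroup H] [Fintype H]
    [DecidableEq H] (f : G →+ H) :
    Fintype.card H * #{x | f x ≠ 0} ≤ (Fintype.card H - 1) * Fintype.card G := by
  have hker : Fintype.card G ≤ Fintype.card H * #{x | f x = 0} := by
    simp only [← Fintype.card_subtype, ← Nat.card_eq_fintype_card]
    exact card_le_card_mul_card_ker f
  rw [Nat.sub_one_mul]
  refine Nat.le_sub_of_add_le ?_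
  calc Fintype.card H * #{x | f x ≠ 0} + Fintype.card G
      ≤ Fintype.card H * #{x | f x ≠ 0} + Fintype.card H * #{x | f x = 0} := by gcongr
    _ = Fintype.card H * Fintype.card G := by
        rw [← mul_add, add_comm, card_filter_add_card_filter_not, card_univ]

variable {ι H : Type*} [Fintype ι] [AddGroup H] [Fintype H] [DecidableEq H]
  {C : AddSubgroup (ι → H)} [Fintype C]

variable (C) in
theorem card_mul_sum_hammingNorm_le :
    Fintype.card H * ∑ x : C, hammingNorm x.1 ≤
      (Fintype.card H - 1) * Fintype.card ι * Fintype.card C := by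
  have hswap : ∑ x : C, hammingNorm x.1 = ∑ i, #{x : C | x.1 i ≠ 0} := by
    simp only [hammingNorm, card_filter]
    exact sum_comm
  calc Fintype.card H * ∑ x : C, hammingNorm x.1
      = ∑ i, Fintype.card H * #{x : C | x.1 i ≠ 0} := by rw [hswap, mul_sum]
    _ ≤ ∑ _i : ι, (Fintype.card H - 1) * Fintype.card C :=
        sum_le_sum fun i _ ↦
          card_mul_card_ne_zero_le ((Pi.evalAddMonoidHom (fun _ ↦ H) i).comp C.subtype)
    _ = (Fintype.card H - 1) * Fintype.card ι * Fintype.card C := by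
        rw [sum_const, card_univ, smul_eq_mul]
        ring

theorem plotkin_bound {d : ℕ} (hd : ∀ x ∈ C, x ≠ 0 → d ≤ hammingNorm x) :
    Fintype.card H * ((Fintype.card C - 1) * d) ≤
      (Fintype.card H - 1) * Fintype.card ι * Fintype.card C := by
  classical
  refine le_trans (Nat.mul_le_mul_left _ ?_) (card_mul_sum_hammingNorm_le C)
  calc (Fintype.card C - 1) * d = ∑ _x ∈ univ.erase (0 : C), d := by
        rw [sum_const, card_erase_of_mem (mem_univ _), card_univ, smul_eq_mul]
    _ ≤ ∑ x ∈ univ.erase (0 : C), hammingNorm x.1 :=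
        sum_le_sum fun x hx ↦ hd x x.2 (by simpa using ne_of_mem_erase hx)
    _ ≤ ∑ x : C, hammingNorm x.1 := sum_le_sum_of_subset (erase_subset _ _)

theorem exists_hammingNorm_le_pow [Nontrivial H] {k : ℕ}
    (hlength : (Fintype.card H - 1) * Fintype.card ι < Fintype.card H ^ (k + 1))
    (hcard : Fintype.card H ^ (k + 1) ≤ Fintype.card C) :
    ∃ x ∈ C, x ≠ 0 ∧ hammingNorm x ≤ Fintype.card H ^ k := by
  by_contra! hheavy
  have hplotkin := plotkin_bound (d := Fintype.card H ^ k + 1) hheavy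
  have hq : 1 < Fintype.card H := Fintype.one_lt_card
  have hC : 1 < Fintype.card C := (Nat.one_lt_pow k.succ_ne_zero hq).trans_le hcard
  obtain ⟨N, hN⟩ : ∃ N, Fintype.card C = N + 1 := ⟨Fintype.card C - 1, by omega⟩
  rw [hN, Nat.add_sub_cancel] at hplotkin
  set q := Fintype.card H
  set L := (q - 1) * Fintype.card ι
  refine hplotkin.not_gt ?_
  calc L * (N + 1) = N * L + L := by ring
    _ ≤ N * L + N := by gcongr; omega
    _ = N * (L + 1) := by ring
    _ ≤ N * q ^ (k + 1) := Nat.mul_le_mul_left N hlength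
    _ < N * q ^ (k + 1) + N * q := Nat.lt_add_of_pos_right (Nat.mul_pos (by omega) (by omega))
    _ = q * (N * (q ^ k + 1)) := by ring

end AdditiveCode

section ColumnSets

variable {R C : Type*} {A : Matrix R C ℕ}

/-- A set `S` of columns of `A` is *1-free* if no row of `A` sums to exactly `1` over `S`.
This is the condition minimized over in `stoppingDistance`. -/
def IsOneFree (A : Matrix R C ℕ) (S : Finset C) : Prop :=
  ∀ i, ∑ j ∈ S, A i j ≠ 1

/-- A set `S` of columns of `A` is *even* if every row of `A` has an even sum over `S`.
This is the condition minimized over in `codeDistance`. -/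
def IsEvenSet (A : Matrix R C ℕ) (S : Finset C) : Prop :=
  ∀ i, Even (∑ j ∈ S, A i j)

theorem IsEvenSet.isOneFree {S : Finset C} (hS : IsEvenSet A S) : IsOneFree A S :=
  fun i hi ↦ Nat.not_even_one (hi ▸ hS i)

theorem IsOneFree.of_submatrix {R' C' : Type*} {f : R' → R} (hf : Function.Surjective f)
    {g : C' ↪ C} {S : Finset C'} (hS : IsOneFree (A.submatrix f g) S) :
    IsOneFree A (S.map g) := by
  refine hf.forall.mpr fun i ↦ ?_
  rw [sum_map]
  exact hS i

theorem isEvenSet_support_iff [Fintype C] {x : C → ZMod 2} :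
    IsEvenSet A {j | x j ≠ 0} ↔ (A.map (Nat.cast : ℕ → ZMod 2)).mulVec x = 0 := by
  have hindicator (a : ZMod 2) : a = if a ≠ 0 then 1 else 0 := by decide +revert
  have hrow (i : R) :
      ((∑ j with x j ≠ 0, A i j : ℕ) : ZMod 2) = (A.map Nat.cast).mulVec x i := by
    rw [Nat.cast_sum, sum_filter]
    refine sum_congr rfl fun j _ ↦ ?_
    exact (mul_boole _ _).symm.trans (congrArg _ (hindicator (x j)).symm)
  simp only [IsEvenSet, ← ZMod.natCast_eq_zero_iff_even, hrow, funext_iff, Pi.zero_apply]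

theorem exists_isEvenSet_card_le [Fintype R] [Fintype C] (A : Matrix R C ℕ) {k : ℕ}
    (hdim : Fintype.card R + (k + 1) ≤ Fintype.card C) (hlength : Fintype.card C < 2 ^ (k + 1)) :
    ∃ S : Finset C, S.Nonempty ∧ IsEvenSet A S ∧ #S ≤ 2 ^ k := by
  classical
  let syndrome : (C → ZMod 2) →+ (R → ZMod 2) :=
    (A.map (Nat.cast : ℕ → ZMod 2)).mulVecLin.toAddMonoidHom
  have hcard : 2 ^ (k + 1) ≤ Fintype.card syndrome.ker := by
    have h := card_le_card_mul_card_ker syndrome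
    simp only [Nat.card_eq_fintype_card, Fintype.card_fun, ZMod.card] at h
    refine Nat.le_of_mul_le_mul_left (le_trans ?_ h) (Nat.two_pow_pos (Fintype.card R))
    rw [← pow_add]
    exact Nat.pow_le_pow_right two_pos hdim
  obtain ⟨x, hx, hx0, hweight⟩ := exists_hammingNorm_le_pow (C := syndrome.ker) (k := k)
    (by rwa [ZMod.card, Nat.add_one_sub_one, one_mul]) (by rwa [ZMod.card])
  refine ⟨univ.filter fun j ↦ x j ≠ 0, ?_, isEvenSet_support_iff.mpr hx, ?_⟩
  · simpa [filter_nonempty_iff] using Function.ne_iff.mp hx0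
  · rwa [ZMod.card] at hweight

end ColumnSets

section Doubling

variable {R C : Type*} [DecidableEq C] {A : Matrix R C ℕ} {S : Finset (C ⊕ (C ⊕ Unit))}

/-- The block matrix with rows `[A | 0 | 0]` and `[I | I | 1]`. If `A` is a parity-check matrix of
the simplex code of dimension `k`, then `doubling A` is one for dimension `k + 1`. -/
def doubling (A : Matrix R C ℕ) : Matrix (R ⊕ C) (C ⊕ (C ⊕ Unit)) ℕ :=
  Matrix.fromBlocks A 0 1 (Matrix.fromCols 1 (Matrix.of fun _ _ ↦ 1))

theorem doubling_le_one (hA : ∀ i j, A i j ≤ 1) (i : R ⊕ C) (j : C ⊕ (C ⊕ Unit)) :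
    doubling A i j ≤ 1 := by
  rcases i with i | i <;> rcases j with j | j | _ <;> simp [doubling, hA, Matrix.one_apply] <;>
    split_ifs <;> simp

theorem isOneFree_doubling_iff :
    IsOneFree (doubling A) S ↔ IsOneFree A S.toLeft ∧
      ∀ j, (if j ∈ S.toLeft then 1 else 0) +
        ((if j ∈ S.toRight.toLeft then 1 else 0) + #S.toRight.toRight) ≠ 1 := by
  simp [IsOneFree, doubling, Sum.forall, sum_sum_eq_sum_toLeft_add_sum_toRight, Matrix.one_apply]

theorem le_card_of_isOneFree_doubling [Fintype C] {d : ℕ}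
    (hA : ∀ T : Finset C, T.Nonempty → IsOneFree A T → d ≤ #T)
    (hne : S.Nonempty) (hS : IsOneFree (doubling A) S) :
    min (2 * d) (Fintype.card C + 1) ≤ #S := by
  obtain ⟨hleft, hrow⟩ := isOneFree_doubling_iff.mp hS
  have hcard : #S = #S.toLeft + (#S.toRight.toLeft + #S.toRight.toRight) := by
    rw [card_toLeft_add_card_toRight, card_toLeft_add_card_toRight]
  have hpos := hne.card_pos
  rcases eq_empty_or_nonempty S.toRight.toRight with hlast | hlast
  · rw [hlast, card_empty] at hcard hrow
    have hcopies : S.toLeft = S.toRight.toLeft := by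
      ext j
      have := hrow j
      split_ifs at this <;> simp_all only [ne_eq, not_true_eq_false]
    rw [← hcopies] at hcard
    have := hA S.toLeft (card_pos.mp (by omega)) hleft
    omega
  · have hlast_card : #S.toRight.toRight = 1 :=
      (card_le_univ S.toRight.toRight).antisymm hlast.card_pos
    have hcover : S.toLeft ∪ S.toRight.toLeft = univ := by
      refine eq_univ_of_forall fun j ↦ mem_union.mpr ?_
      by_contra! hj
      exact hrow j (by rw [if_neg hj.1, if_neg hj.2, hlast_card])
    have := card_union_le S.toLeft S.toRight.toLeft
    rw [hcover, card_univ] at this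
    omega

theorem exists_matrix_forall_isOneFree_le_card (k : ℕ) :
    ∃ A : Matrix (Fin (2 ^ (k + 1) - 1 - (k + 1))) (Fin (2 ^ (k + 1) - 1)) ℕ,
      (∀ i j, A i j ≤ 1) ∧ ∀ S, S.Nonempty → IsOneFree A S → 2 ^ k ≤ #S := by
  induction k with
  | zero => exact ⟨0, fun _ _ ↦ zero_le_one, fun S hne _ ↦ hne.card_pos⟩
  | succ k ih =>
    obtain ⟨A, hA, hmin⟩ := ih
    have hlt : k + 1 < 2 ^ (k + 1) := Nat.lt_two_pow_self
    generalize hm : 2 ^ (k + 1) - 1 - (k + 1) = m at A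
    generalize hn : 2 ^ (k + 1) - 1 = n at A
    have rows : Fin (2 ^ (k + 1 + 1) - 1 - (k + 1 + 1)) ≃ Fin m ⊕ Fin n :=
      Fintype.equivOfCardEq (by simp only [Fintype.card_sum, Fintype.card_fin]; omega)
    have cols : Fin (2 ^ (k + 1 + 1) - 1) ≃ Fin n ⊕ (Fin n ⊕ Unit) :=
      Fintype.equivOfCardEq (by
        simp only [Fintype.card_sum, Fintype.card_fin, Fintype.card_unit]; omega)
    refine ⟨(doubling A).submatrix rows cols, fun _ _ ↦ doubling_le_one hA _ _, fun S hne hS ↦ ?_⟩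
    have := le_card_of_isOneFree_doubling hmin (hne.map (f := cols.toEmbedding))
      (.of_submatrix rows.surjective hS)
    rw [card_map, Fintype.card_fin] at this
    omega

end Doubling

section Distance

variable {m n : ℕ} {A : Matrix (Fin m) (Fin n) ℕ} {S : Finset (Fin n)}

theorem codeDistance_le_card (hne : S.Nonempty) (hS : IsEvenSet A S) : codeDistance A ≤ #S :=
  Nat.sInf_le ⟨S, hne, hS, rfl⟩

theorem stoppingDistance_le_codeDistance (hne : S.Nonempty) (hS : IsEvenSet A S) :
    stoppingDistance A ≤ codeDistance A :=
  le_csInf ⟨_, S, hne, hS, rfl⟩ fun _ ⟨T, hT_ne, hT, hcard⟩ ↦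
    Nat.sInf_le ⟨T, hT_ne, IsEvenSet.isOneFree hT, hcard⟩

theorem le_stoppingDistance {d : ℕ} (hne : S.Nonempty) (hS : IsOneFree A S)
    (hd : ∀ T : Finset (Fin n), T.Nonempty → IsOneFree A T → d ≤ #T) :
    d ≤ stoppingDistance A :=
  le_csInf ⟨_, S, hne, hS, rfl⟩ fun _ ⟨T, hT_ne, hT, hcard⟩ ↦ hcard ▸ hd T hT_ne hT

theorem maxStoppingDistance_eq_and_maxCodeDistance_eq {d : ℕ}
    (heven : ∀ B : Matrix (Fin m) (Fin n) ℕ, (∀ i j, B i j ≤ 1) →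
      ∃ S : Finset (Fin n), S.Nonempty ∧ IsEvenSet B S ∧ #S ≤ d)
    (hA : ∀ i j, A i j ≤ 1) (hmin : ∀ S : Finset (Fin n), S.Nonempty → IsOneFree A S → d ≤ #S) :
    maxStoppingDistance m n = d ∧ maxCodeDistance m n = d := by
  have hle (B : Matrix (Fin m) (Fin n) ℕ) (hB : ∀ i j, B i j ≤ 1) :
      stoppingDistance B ≤ codeDistance B ∧ codeDistance B ≤ d := by
    obtain ⟨S, hne, hS, hcard⟩ := heven B hB
    exact ⟨stoppingDistance_le_codeDistance hne hS, (codeDistance_le_card hne hS).trans hcard⟩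
  have hge : d ≤ stoppingDistance A := by
    obtain ⟨S, hne, hS, -⟩ := heven A hA
    exact le_stoppingDistance hne hS.isOneFree hmin
  obtain ⟨hAstop, hAcode⟩ := hle A hA
  constructor
  · exact IsGreatest.csSup_eq ⟨⟨A, hA, (hAstop.trans hAcode).antisymm hge⟩,
      fun _ ⟨B, hB, hd⟩ ↦ hd ▸ (hle B hB).1.trans (hle B hB).2⟩
  · exact IsGreatest.csSup_eq ⟨⟨A, hA, hAcode.antisymm (hge.trans hAstop)⟩,
      fun _ ⟨B, hB, hd⟩ ↦ hd ▸ (hle B hB).2⟩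

end Distance

/-- For every integer `k ≥ 2`,
`u(2^k − 1 − k, 2^k − 1) = ε(2^k − 1 − k, 2^k − 1) = 2^(k−1)`. -/
theorem stmt_6 (k : ℕ) (hk : 2 ≤ k) :
    maxStoppingDistance (2 ^ k - 1 - k) (2 ^ k - 1) = 2 ^ (k - 1) ∧
    maxCodeDistance (2 ^ k - 1 - k) (2 ^ k - 1) = 2 ^ (k - 1) := by
  obtain ⟨k, rfl⟩ : ∃ l, k = l + 1 := ⟨k - 1, by omega⟩
  rw [Nat.add_sub_cancel]
  have hlt : k + 1 < 2 ^ (k + 1) := Nat.lt_two_pow_self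
  obtain ⟨A, hA, hmin⟩ := exists_matrix_forall_isOneFree_le_card k
  refine maxStoppingDistance_eq_and_maxCodeDistance_eq
    (fun B _ ↦ exists_isEvenSet_card_le B ?_ ?_) hA hmin
  · simp only [Fintype.card_fin]
    omega
  · rw [Fintype.card_fin]
    omega
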